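/- arXiv:1906.00013 — 3 statements merged into one kernel-verified Lean document; each statement's English description precedes it below -/
import Mathlib

section
/- Let H be a finite simple graph with at least two edges, let (T,b) be a branch decomposition of H, and let C ⊆ V(H) be a clique of H with |C| ≥ 2. Then there exists a vertex t₀ of T such that t₀ belongs to the subtree S_v for every v ∈ C. -/
/-!
The subtrees `S_v`, `v ∈ C`, meet pairwise: the leaf of the edge `vw` lies in `S_v` and in `S_w`.
The claim is therefore an instance of the Helly property of subtrees of a tree.

Suppose no vertex of `T` is common to all `S_v`. Then every vertex `t` is missed by some
`S_v` with `v ∈ C`, and since `S_v` is connected, it lies beyond a single neighbour `f t` of `t`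
(`exists_adj_side`). A tree has fewer edges than vertices, so the map sending `t` to the edge
from `t` to `f t` is not injective, which produces adjacent `s` and `t` with `f t = s` and
`f s = t`. The two corresponding subtrees lie on opposite sides of the bridge `st`, yet they
share a leaf, a contradiction (`not_mem_both_sides`).
-/

open SimpleGraph Finset
open scoped Classical

noncomputable section

/-- A tree embedding of a simple graph `G` into a cubic tree on vertex type `W`:
a finite tree `T` all of whose vertices have degree 1 or 3, together with a bijection
`b` from the vertices of `G` to the leaves of `T`. -/
structure TreeEmbedding {V : Type} (G : SimpleGraph V) (W : Type) [Fintype W] where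
  T : SimpleGraph W
  b : V → W
  isTree : T.IsTree
  cubic : ∀ t : W, (T.neighborSet t).ncard = 1 ∨ (T.neighborSet t).ncard = 3
  leaf_b : ∀ v : V, (T.neighborSet (b v)).ncard = 1
  inj : Function.Injective b
  surj_leaf : ∀ t : W, (T.neighborSet t).ncard = 1 → ∃ v : V, b v = t

variable {V W : Type} [Fintype V] [Fintype W]

/-- The routing of the edge `e` of `G` passes through the vertex `t` of the tree. -/
def RoutesThruV {G : SimpleGraph V} (E : TreeEmbedding G W) (e : Sym2 V) (t : W) : Prop :=
  ∃ u v : V, e = s(u, v) ∧ ∃ p : E.T.Walk (E.b u) (E.b v), p.IsPath ∧ t ∈ p.support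

/-- The routing of the edge `e` of `G` passes through the edge `f` of the tree. -/
def RoutesThruE {G : SimpleGraph V} (E : TreeEmbedding G W) (e : Sym2 V) (f : Sym2 W) : Prop :=
  ∃ u v : V, e = s(u, v) ∧ ∃ p : E.T.Walk (E.b u) (E.b v), p.IsPath ∧ f ∈ p.edges

/-- The (weighted) congestion of a vertex `t` of the tree. -/
def conV {G : SimpleGraph V} (E : TreeEmbedding G W) (w : Sym2 V → ℕ) (t : W) : ℕ :=
  ∑ e ∈ G.edgeFinset.filter (fun e => RoutesThruV E e t), w e

/-- The (weighted) congestion of an edge `f` of the tree. -/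
def conE {G : SimpleGraph V} (E : TreeEmbedding G W) (w : Sym2 V → ℕ) (f : Sym2 W) : ℕ :=
  ∑ e ∈ G.edgeFinset.filter (fun e => RoutesThruE E e f), w e

/-- The vertex congestion of a tree embedding. -/
def vcOf {G : SimpleGraph V} (E : TreeEmbedding G W) (w : Sym2 V → ℕ) : ℕ :=
  Finset.univ.sup (conV E w)

/-- The edge congestion of a tree embedding. -/
def ecOf {G : SimpleGraph V} (E : TreeEmbedding G W) (w : Sym2 V → ℕ) : ℕ :=
  E.T.edgeFinset.sup (conE E w)

/-- The vertex congestion of a graph: minimum over tree embeddings. -/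
def vcG (G : SimpleGraph V) (w : Sym2 V → ℕ) : ℕ :=
  sInf {k | ∃ (n : ℕ) (E : TreeEmbedding G (Fin n)), vcOf E w = k}

/-- The edge congestion of a graph: minimum over tree embeddings. -/
def ecG (G : SimpleGraph V) (w : Sym2 V → ℕ) : ℕ :=
  sInf {k | ∃ (n : ℕ) (E : TreeEmbedding G (Fin n)), ecOf E w = k}

/-- A branch decomposition of a simple graph `H`: a cubic tree together with a bijection
from the edges of `H` to the leaves of the tree. -/
structure BranchDecomp {U : Type} (H : SimpleGraph U) (W : Type) [Fintype W] where
  T : SimpleGraph W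
  b : H.edgeSet → W
  isTree : T.IsTree
  cubic : ∀ t : W, (T.neighborSet t).ncard = 1 ∨ (T.neighborSet t).ncard = 3
  leaf_b : ∀ e : H.edgeSet, (T.neighborSet (b e)).ncard = 1
  inj : Function.Injective b
  surj_leaf : ∀ t : W, (T.neighborSet t).ncard = 1 → ∃ e : H.edgeSet, b e = t

variable {U : Type} [Fintype U]

/-- The vertex `t` of the tree lies on the subtree `S_v` (the minimal subtree of `T`
containing all leaves `b e` with `e` incident to `v`). -/
def InSubtreeV {H : SimpleGraph U} {W : Type} [Fintype W] (D : BranchDecomp H W) (v : U)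
    (t : W) : Prop :=
  ∃ e₁ e₂ : H.edgeSet, v ∈ (e₁ : Sym2 U) ∧ v ∈ (e₂ : Sym2 U) ∧
    ∃ p : D.T.Walk (D.b e₁) (D.b e₂), p.IsPath ∧ t ∈ p.support

/-- The edge `f` of the tree lies on the subtree `S_v`. -/
def InSubtreeE {H : SimpleGraph U} {W : Type} [Fintype W] (D : BranchDecomp H W) (v : U)
    (f : Sym2 W) : Prop :=
  ∃ e₁ e₂ : H.edgeSet, v ∈ (e₁ : Sym2 U) ∧ v ∈ (e₂ : Sym2 U) ∧
    ∃ p : D.T.Walk (D.b e₁) (D.b e₂), p.IsPath ∧ f ∈ p.edges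

/-- The width of an edge `f` of the tree of a branch decomposition. -/
def widthE {H : SimpleGraph U} {W : Type} [Fintype W] (D : BranchDecomp H W) (f : Sym2 W) : ℕ :=
  (Finset.univ.filter (fun v : U => InSubtreeE D v f)).card

/-- The width of a branch decomposition. -/
def widthOf {H : SimpleGraph U} {W : Type} [Fintype W] (D : BranchDecomp H W) : ℕ :=
  D.T.edgeFinset.sup (widthE D)

/-- The branchwidth of a simple graph (0 if it admits no branch decomposition). -/
def branchwidth (H : SimpleGraph U) : ℕ :=
  sInf {k | ∃ (n : ℕ) (D : BranchDecomp H (Fin n)), widthOf D = k}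

/-- The maximum degree of a finite simple graph. -/
def maxDeg (G : SimpleGraph V) : ℕ :=
  Finset.univ.sup (fun v => (G.neighborSet v).ncard)

/-- The weighted degree of a vertex. -/
def degw (G : SimpleGraph V) (w : Sym2 V → ℕ) (v : V) : ℕ :=
  ∑ e ∈ G.edgeFinset.filter (fun e => v ∈ e), w e

end

/-- The vertices on the `s`-side of the pair `t s`: those still reachable from `s` once the
edge joining `t` and `s` is deleted. -/
def OnSide {W : Type} (T : SimpleGraph W) (t s x : W) : Prop :=
  (T.deleteEdges {s(t, s)}).Reachable s x

/-- A walk avoiding `t` uses no edge at `t`, so it survives the deletion of the edge `ts`. -/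
lemma reachable_of_avoids {W : Type} {T : SimpleGraph W} {t s x y : W} (p : T.Walk x y)
    (hp : t ∉ p.support) : (T.deleteEdges {s(t, s)}).Reachable x y := by
  refine ⟨p.toDeleteEdge _ fun h => hp ?_⟩
  exact p.fst_mem_support_of_mem_edges h

lemma not_mem_both_sides {W : Type} {T : SimpleGraph W} (hT : T.IsAcyclic) {t s x : W}
    (hts : T.Adj t s) (h₁ : OnSide T t s x) (h₂ : OnSide T s t x) : False := by
  have hb := isAcyclic_iff_forall_adj_isBridge.1 hT hts
  rw [isBridge_iff] at hb
  rw [OnSide, Sym2.eq_swap] at h₂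
  exact hb (h₂.trans h₁.symm)

/-- If `S_v` misses `t`, then all leaves spanning `S_v` lie beyond one neighbour of `t`. -/
lemma exists_adj_side {U W : Type} [Fintype W] {H : SimpleGraph U} (D : BranchDecomp H W)
    {v : U} {t : W} (e₀ : H.edgeSet) (he₀ : v ∈ (e₀ : Sym2 U)) (ht : ¬ InSubtreeV D v t) :
    ∃ s, D.T.Adj t s ∧ ∀ e : H.edgeSet, v ∈ (e : Sym2 U) → OnSide D.T t s (D.b e) := by
  have avoid : ∀ e : H.edgeSet, v ∈ (e : Sym2 U) →
      ∃ p : D.T.Walk (D.b e₀) (D.b e), t ∉ p.support := by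
    intro e he
    obtain ⟨p, hp, -⟩ := D.isTree.existsUnique_path (D.b e₀) (D.b e)
    exact ⟨p, fun h => ht ⟨e₀, e, he₀, he, p, hp, h⟩⟩
  obtain ⟨p, hp, -⟩ := D.isTree.existsUnique_path t (D.b e₀)
  generalize hx : D.b e₀ = x at p
  cases p with
  | nil =>
    obtain ⟨q, hq⟩ := avoid e₀ he₀
    exact absurd (hx ▸ q.start_mem_support) hq
  | @cons _ s _ h q =>
    subst hx
    rw [Walk.cons_isPath_iff] at hp
    refine ⟨s, h, fun e he => ?_⟩
    obtain ⟨r, hr⟩ := avoid e he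
    exact (reachable_of_avoids q hp.2).trans (reachable_of_avoids r hr)

theorem exists_common_vertex_of_clique {U : Type} [Fintype U] (H : SimpleGraph U)
    (hE : 2 ≤ H.edgeSet.ncard)
    {W : Type} [Fintype W] (D : BranchDecomp H W)
    (C : Set U) (hC : H.IsClique C) (hCard : 2 ≤ C.ncard) :
    ∃ t₀ : W, ∀ v ∈ C, InSubtreeV D v t₀ := by
  have pair : ∀ v ∈ C, ∀ w ∈ C, ∃ e : H.edgeSet, v ∈ (e : Sym2 U) ∧ w ∈ (e : Sym2 U) := by
    intro v hv w hw
    by_cases hvw : v = w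
    · subst hvw
      obtain ⟨u, hu, huv⟩ := Set.exists_ne_of_one_lt_ncard hCard v
      exact ⟨⟨s(v, u), hC hv hu huv.symm⟩, by simp, by simp⟩
    · exact ⟨⟨s(v, w), hC hv hw hvw⟩, by simp, by simp⟩
  by_contra! hno
  choose g hgC hg using hno
  have side : ∀ t, ∃ s, D.T.Adj t s ∧
      ∀ e : H.edgeSet, g t ∈ (e : Sym2 U) → OnSide D.T t s (D.b e) := by
    intro t
    obtain ⟨e₀, he₀, -⟩ := pair (g t) (hgC t) (g t) (hgC t)
    exact exists_adj_side D e₀ he₀ (hg t)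
  choose f hadj hf using side
  have hcard := D.isTree.card_edgeFinset
  obtain ⟨t, -, t', -, hne, heq⟩ := Finset.exists_ne_map_eq_of_card_lt_of_maps_to
    (s := (Finset.univ : Finset W)) (t := D.T.edgeFinset) (f := fun t => s(t, f t))
    (by rw [Finset.card_univ]; omega)
    (fun t _ => by simpa using hadj t)
  -- As `t ≠ t'`, equality of the two edges forces `f t = t'` and `f t' = t`.
  rcases Sym2.eq_iff.1 heq with ⟨h, -⟩ | ⟨h₁, h₂⟩
  · exact hne h
  · obtain ⟨e, he, he'⟩ := pair (g t) (hgC t) (g t') (hgC t')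
    have k₁ := hf t e he
    have k₂ := hf t' e he'
    rw [h₂] at k₁
    rw [← h₁] at k₂
    exact not_mem_both_sides D.isTree.isAcyclic (h₂ ▸ hadj t) k₁ k₂
end

section
/- Let G be a finite simple graph with at least two vertices and at least one edge, and let (T,b) be a tree embedding of G. For each vertex t of T set X_t = {e ∈ E(G) : the routing S_e contains t}. Then the pair (T,(X_t)_{t∈V(T)}) is a tree decomposition of the line graph L(G), and the maximum bag size max_{t∈V(T)} |X_t| equals the vertex congestion vc(T,b). -/
/-!
The routing of an edge `s(u, v)` is the support of a path of the tree between `b u` and `b v`, and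
in a tree that path is unique (`routesThruV_iff_mem_support`). Hence the set of tree vertices whose
bag contains a given edge is the support of one path, which is nonempty and induces a connected
subgraph. Two edges of `G` with a common endpoint `v` both have routings through the leaf `b v`
(`routesThruV_of_mem`), so they share the bag at `b v`. Finally, the size of the bag at `t` is by
definition the number of edges routed through `t`, that is, the congestion of `t` for the constant
weight `1` (`ncard_bag_eq_conV`).
-/

open SimpleGraph Finset
open scoped Classical

/-- A tree decomposition of `H`: a finite tree `T` with bags `X t ⊆ V(H)` such that every edge
of `H` has both endpoints in some common bag, and for every vertex of `H` the set of tree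
vertices whose bag contains it is nonempty and induces a connected subtree of `T`. -/
def IsTreeDecomp {U W : Type} (H : SimpleGraph U) (T : SimpleGraph W) (X : W → Set U) : Prop :=
  T.IsTree ∧
  (∀ u v : U, H.Adj u v → ∃ t : W, u ∈ X t ∧ v ∈ X t) ∧
  (∀ v : U, (T.induce {t : W | v ∈ X t}).Connected)

/-- By uniqueness of paths in a tree, any path between the leaves of `u` and `v` computes the
routing of `s(u, v)`, whichever order of the endpoints is used in `RoutesThruV`. -/
lemma routesThruV_iff_mem_support {V W : Type} [Fintype W] {G : SimpleGraph V}
    (E : TreeEmbedding G W) {u v : V} {p : E.T.Walk (E.b u) (E.b v)} (hp : p.IsPath) (t : W) :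
    RoutesThruV E s(u, v) t ↔ t ∈ p.support := by
  constructor
  · rintro ⟨u', v', h, q, hq, ht⟩
    rcases Sym2.eq_iff.1 h with ⟨rfl, rfl⟩ | ⟨rfl, rfl⟩
    · rwa [(E.isTree.existsUnique_path _ _).unique hp hq]
    · rw [(E.isTree.existsUnique_path _ _).unique hp hq.reverse]
      simpa using ht
  · exact fun ht => ⟨u, v, rfl, p, hp, ht⟩

lemma routesThruV_of_mem {V W : Type} [Fintype W] {G : SimpleGraph V}
    (E : TreeEmbedding G W) {e : Sym2 V} {v : V} (hv : v ∈ e) : RoutesThruV E e (E.b v) := by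
  obtain ⟨w, rfl⟩ := hv
  obtain ⟨p, hp, -⟩ := E.isTree.existsUnique_path (E.b v) (E.b w)
  exact ⟨v, w, rfl, p, hp, p.start_mem_support⟩

lemma ncard_bag_eq_conV {V W : Type} [Fintype V] [Fintype W] {G : SimpleGraph V}
    (E : TreeEmbedding G W) (t : W) :
    {e : G.edgeSet | RoutesThruV E (e : Sym2 V) t}.ncard = conV E (fun _ => 1) t := by
  rw [conV, Finset.sum_const, smul_eq_mul, mul_one, ← Set.ncard_coe_finset,
    ← Set.ncard_image_of_injective _ Subtype.val_injective]
  congr 1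
  ext e
  simp [and_comm]

theorem treeEmbedding_gives_treeDecomp_of_lineGraph {V : Type} [Fintype V] (G : SimpleGraph V)
    (hV : 2 ≤ Fintype.card V) (hE : G.edgeSet.Nonempty)
    {W : Type} [Fintype W] (E : TreeEmbedding G W) :
    IsTreeDecomp G.lineGraph E.T
        (fun t => {e : G.edgeSet | RoutesThruV E (e : Sym2 V) t}) ∧
      Finset.univ.sup
          (fun t : W => {e : G.edgeSet | RoutesThruV E (e : Sym2 V) t}.ncard)
        = vcOf E (fun _ => 1) := by
  refine ⟨⟨E.isTree, ?_, ?_⟩, ?_⟩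
  · intro e f hef
    obtain ⟨-, v, hve, hvf⟩ := (lineGraph_adj_iff_exists).1 hef
    exact ⟨E.b v, routesThruV_of_mem E hve, routesThruV_of_mem E hvf⟩
  · rintro ⟨e, he⟩
    induction e with | _ u v
    obtain ⟨p, hp, -⟩ := E.isTree.existsUnique_path (E.b u) (E.b v)
    have hset : {t : W | (⟨s(u, v), he⟩ : G.edgeSet) ∈
        {e : G.edgeSet | RoutesThruV E (e : Sym2 V) t}} = {t | t ∈ p.support} :=
      Set.ext fun t => routesThruV_iff_mem_support E hp t
    rw [hset]
    exact p.connected_induce_support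
  · simp only [ncard_bag_eq_conV]
    rfl
end

section
/- Let G be a finite simple graph with at least two vertices and let w : E(G) → ℕ be edge weights. For every tree embedding (T,b) of G, one has 2·vc(T,b) ≤ 3·ec(T,b). Consequently 2·vc(G) ≤ 3·ec(G). -/
/-! For each vertex `t` of the tree with neighbour set `N`, double counting the pairs
(routed edge `e`, neighbour `s` such that the routing of `e` uses `ts`) shows that if every
routing through `t` uses at least `k` of the tree edges at `t`, then
`k * con(t) ≤ ∑ s ∈ N, con(ts) ≤ #N * ec` (`mul_conV_le`). A routing joins two distinct leaves, so it
uses at least one edge at each of its vertices, which settles the leaves (`k = #N = 1`). At a vertex of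
degree 3, which cannot be an end of a routing, it uses two edges, so `k = 2`, `#N = 3`.

The inequality for `G` follows by taking an embedding that attains `ec(G)`; if there were no
embedding into any `Fin n`, both infima would be `0`. -/

open SimpleGraph Finset
open scoped Classical

/-- Double counting at the vertex `t`: if every routing through `t` uses at least `k` of the tree
edges at `t`, then `k` times the congestion of `t` is at most the degree of `t` times the edge
congestion. -/
lemma mul_conV_le {V W : Type} [Fintype V] [Fintype W] {G : SimpleGraph V}
    (E : TreeEmbedding G W) (w : Sym2 V → ℕ) (t : W) (k : ℕ)
    (hk : ∀ e ∈ G.edgeFinset, RoutesThruV E e t →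
      k ≤ #{s ∈ E.T.neighborFinset t | RoutesThruE E e s(t, s)}) :
    k * conV E w t ≤ #(E.T.neighborFinset t) * ecOf E w := by
  calc k * conV E w t
      = ∑ e ∈ G.edgeFinset with RoutesThruV E e t, k * w e := by
        rw [conV, Finset.mul_sum]
    _ ≤ ∑ e ∈ G.edgeFinset with RoutesThruV E e t,
          #{s ∈ E.T.neighborFinset t | RoutesThruE E e s(t, s)} * w e := by
        refine Finset.sum_le_sum fun e he => ?_
        rw [Finset.mem_filter] at he
        exact Nat.mul_le_mul_right _ (hk e he.1 he.2)
    _ ≤ ∑ e ∈ G.edgeFinset,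
          #{s ∈ E.T.neighborFinset t | RoutesThruE E e s(t, s)} * w e :=
        Finset.sum_le_sum_of_subset (Finset.filter_subset _ _)
    _ = ∑ s ∈ E.T.neighborFinset t, conE E w s(t, s) := by
        simp only [conE, Finset.sum_filter, Finset.card_filter, Finset.sum_mul]
        rw [Finset.sum_comm]
        simp
    _ ≤ ∑ s ∈ E.T.neighborFinset t, ecOf E w := by
        refine Finset.sum_le_sum fun s hs => ?_
        refine Finset.le_sup (f := conE E w) ?_
        simpa using hs
    _ = #(E.T.neighborFinset t) * ecOf E w := by simp

/-- A path passing through `t` in its interior uses two different edges at `t`. -/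
lemma exists_two_edges_of_internal {W : Type} {T : SimpleGraph W} {x y t : W} {p : T.Walk x y}
    (hp : p.IsPath) (ht : t ∈ p.support) (hx : t ≠ x) (hy : t ≠ y) :
    ∃ s₁ s₂ : W, s₁ ≠ s₂ ∧ s(t, s₁) ∈ p.edges ∧ s(t, s₂) ∈ p.edges := by
  obtain ⟨i, rfl, hi⟩ := Walk.mem_support_iff_exists_getVert.1 ht
  have h0 : i ≠ 0 := by rintro rfl; simp at hx
  have hl : i < p.length := lt_of_le_of_ne hi (by rintro rfl; simp at hy)
  obtain ⟨a, b, hab, h⟩ := Set.ncard_eq_two.1 (hp.ncard_neighborSet_toSubgraph_internal_eq_two h0 hl)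
  have mem (s : W) (hs : s ∈ p.toSubgraph.neighborSet (p.getVert i)) :
      s(p.getVert i, s) ∈ p.edges := by
    rw [← Walk.mem_edges_toSubgraph]
    exact hs
  exact ⟨a, b, hab, mem a (by simp [h]), mem b (by simp [h])⟩

lemma two_mul_conV_le {V W : Type} [Fintype V] [Fintype W] {G : SimpleGraph V}
    (E : TreeEmbedding G W) (w : Sym2 V → ℕ) (t : W) :
    2 * conV E w t ≤ 3 * ecOf E w := by
  have hN : #(E.T.neighborFinset t) = (E.T.neighborSet t).ncard := by
    rw [← Set.ncard_coe_finset, coe_neighborFinset]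
  rcases E.cubic t with h | h
  · have key := mul_conV_le E w t 1 ?_
    · rw [hN, h] at key
      omega
    · rintro _ he ⟨u, v, rfl, p, hp, ht⟩
      have huv : E.b u ≠ E.b v := fun hb => by simp [E.inj hb] at he
      have hnil : ¬ p.Nil := Walk.not_nil_of_ne huv
      obtain ⟨f, hf, htf⟩ := (Walk.mem_support_iff_exists_mem_edges_of_not_nil hnil).1 ht
      obtain ⟨s, rfl⟩ := Sym2.mem_iff_exists.1 htf
      rw [Nat.one_le_iff_ne_zero, Finset.card_ne_zero]
      refine ⟨s, ?_⟩
      rw [Finset.mem_filter, mem_neighborFinset]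
      exact ⟨p.adj_of_mem_edges hf, u, v, rfl, p, hp, hf⟩
  · have key := mul_conV_le E w t 2 ?_
    · rwa [hN, h] at key
    · rintro _ he ⟨u, v, rfl, p, hp, ht⟩
      have hne (z : V) : t ≠ E.b z := by
        rintro rfl
        have := E.leaf_b z
        omega
      obtain ⟨a, b, hab, ha, hb⟩ := exists_two_edges_of_internal hp ht (hne u) (hne v)
      refine Finset.one_lt_card.2 ⟨a, ?_, b, ?_, hab⟩ <;> rw [Finset.mem_filter, mem_neighborFinset]
      · exact ⟨p.adj_of_mem_edges ha, u, v, rfl, p, hp, ha⟩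
      · exact ⟨p.adj_of_mem_edges hb, u, v, rfl, p, hp, hb⟩

lemma two_mul_vcOf_le {V W : Type} [Fintype V] [Fintype W] {G : SimpleGraph V}
    (E : TreeEmbedding G W) (w : Sym2 V → ℕ) : 2 * vcOf E w ≤ 3 * ecOf E w := by
  have : vcOf E w ≤ 3 * ecOf E w / 2 := Finset.sup_le fun t _ => by
    have := two_mul_conV_le E w t
    omega
  omega

theorem two_vc_le_three_ec {V : Type} [Fintype V] (G : SimpleGraph V)
    (hV : 2 ≤ Fintype.card V) (w : Sym2 V → ℕ) :
    (∀ (W : Type) [Fintype W] (E : TreeEmbedding G W),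
        2 * vcOf E w ≤ 3 * ecOf E w) ∧
      2 * vcG G w ≤ 3 * ecG G w := by
  refine ⟨fun W _ E => two_mul_vcOf_le E w, ?_⟩
  by_cases hex : ∃ n : ℕ, Nonempty (TreeEmbedding G (Fin n))
  · obtain ⟨n, ⟨E⟩⟩ := hex
    obtain ⟨m, F, hF⟩ := Nat.sInf_mem
      (s := {k | ∃ (n : ℕ) (E : TreeEmbedding G (Fin n)), ecOf E w = k}) ⟨_, n, E, rfl⟩
    have h1 : vcG G w ≤ vcOf F w := Nat.sInf_le ⟨m, F, rfl⟩
    have h2 := two_mul_vcOf_le F w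
    have h3 : ecOf F w = ecG G w := hF
    omega
  -- Without embeddings the infimum defining `vcG` is `sInf ∅ = 0`.
  · have : vcG G w = 0 := by
      refine Nat.sInf_eq_zero.2 (Or.inr (Set.eq_empty_of_forall_notMem ?_))
      rintro k ⟨n, E, -⟩
      exact hex ⟨n, ⟨E⟩⟩
    omega
end
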